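/- Let M : ℕ → ι → α be such that every change of M is single-entry, let J be a finite set of process indices, and for each j let f j : ℕ → ℕ be monotone and P j : ℕ → Prop satisfy the counter invariants (inv1) and (inv2). Let a ≤ b and assume: (i) every change of M at a time t with a ≤ t < b is caused by some process, i.e., M (t+1) ≠ M t implies P j t for some j ∈ J; (ii) f j b ≤ f j a + 1 for every j ∈ J; and (iii) at most one j ∈ J fails to satisfy (f j a = f j b and f j a even). Then every collect with read times in [a,b] is a snapshot over [a,b]: for every c : ι → ℕ with a ≤ c k ≤ b for all k, there exists t with a ≤ t ≤ b such that M (c k) k = M t k for all k. -/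

import Mathlib

/-- A sequence that does not change at any time of `[a, b)` is constant on `[a, b]`. -/
theorem eq_left_of_forall_succ_eq {β : Type*} {g : ℕ → β} {a b : ℕ}
    (h : ∀ t, a ≤ t → t < b → g (t + 1) = g t) {t : ℕ} (hat : a ≤ t) (htb : t ≤ b) :
    g t = g a := by
  induction t, hat using Nat.le_induction with
  | base => rfl
  | succ t hat ih => rw [h t hat htb, ih (Nat.le_of_succ_le htb)]

/-- If `M` changes at most once in `[a, b)`, and every change is single-entry, then every collect
with read times in `[a, b]` is a snapshot over `[a, b]`. -/
theorem exists_snapshot_of_change_unique {ι α : Type*} {M : ℕ → ι → α}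
    (hsingle : ∀ t, M (t + 1) ≠ M t → ∃ k₀ : ι, ∀ k, k ≠ k₀ → M (t + 1) k = M t k)
    {a b : ℕ} (hab : a ≤ b)
    (huniq : ∀ s t, a ≤ s → s < b → a ≤ t → t < b →
      M (s + 1) ≠ M s → M (t + 1) ≠ M t → s = t)
    (c : ι → ℕ) (hc : ∀ k, a ≤ c k ∧ c k ≤ b) :
    ∃ t, a ≤ t ∧ t ≤ b ∧ ∀ k, M (c k) k = M t k := by
  by_cases hchange : ∃ s, a ≤ s ∧ s < b ∧ M (s + 1) ≠ M s
  · obtain ⟨s, has, hsb, hs⟩ := hchange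
    obtain ⟨k₀, hk₀⟩ := hsingle s hs
    refine ⟨c k₀, (hc k₀).1, (hc k₀).2, fun k => ?_⟩
    by_cases hk : k = k₀
    · rw [hk]
    have hconst : ∀ t, a ≤ t → t < b → M (t + 1) k = M t k := by
      intro t hat htb
      by_cases ht : M (t + 1) = M t
      · rw [ht]
      · rw [← huniq s t has hsb hat htb hs ht]
        exact hk₀ k hk
    exact (eq_left_of_forall_succ_eq (g := fun t => M t k) hconst (hc k).1 (hc k).2).trans
      (eq_left_of_forall_succ_eq (g := fun t => M t k) hconst (hc k₀).1 (hc k₀).2).symm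
  · push Not at hchange
    exact ⟨a, le_rfl, hab, fun k =>
      congrFun (eq_left_of_forall_succ_eq hchange (hc k).1 (hc k).2) k⟩

/-- A monotone counter that is odd somewhere in `[a, b]` fails the equal-and-even test. -/
theorem Monotone.not_eq_and_even_of_odd {g : ℕ → ℕ} (hg : Monotone g) {a b t : ℕ}
    (hat : a ≤ t) (htb : t ≤ b) (ht : Odd (g t)) : ¬ (g a = g b ∧ Even (g a)) := by
  rintro ⟨heq, heven⟩
  have : g t = g a := le_antisymm ((hg htb).trans_eq heq.symm) (hg hat)
  exact Nat.not_even_iff_odd.mpr ht (this ▸ heven)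

/-- A monotone counter that increases by at most one over `[a, b]` takes at most one odd value
there. -/
theorem Monotone.eq_of_odd_of_odd {g : ℕ → ℕ} (hg : Monotone g) {a b s t : ℕ}
    (hbound : g b ≤ g a + 1) (has : a ≤ s) (hsb : s ≤ b) (hat : a ≤ t) (htb : t ≤ b)
    (hs : Odd (g s)) (ht : Odd (g t)) : g s = g t := by
  obtain ⟨m, hm⟩ := hs
  obtain ⟨n, hn⟩ := ht
  have := hg has
  have := hg hsb
  have := hg hat
  have := hg htb
  omega

/-- Correctness of the test in lines B13–B15 of the concurrent-updater
algorithm: if every process's counter increases by at most one over `[a,b]`,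
every change of `M` in `[a,b)` is caused by some process, and at most one
process fails the equal-and-even test, then every collect with read times in
`[a,b]` is a snapshot over `[a,b]`. -/
theorem concurrent_updater_scan_correct
    {ι α ι' : Type*} (M : ℕ → ι → α)
    (hsingle : ∀ t, M (t + 1) ≠ M t → ∃ k₀ : ι, ∀ k, k ≠ k₀ → M (t + 1) k = M t k)
    (J : Finset ι') (f : ι' → ℕ → ℕ) (P : ι' → ℕ → Prop)
    (hf : ∀ j ∈ J, Monotone (f j))
    (inv1 : ∀ j ∈ J, ∀ t, P j t → Odd (f j t))
    (inv2 : ∀ j ∈ J, ∀ s t, P j s → P j t → f j s = f j t → s = t)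
    (a b : ℕ) (hab : a ≤ b)
    (hcause : ∀ t, a ≤ t → t < b → M (t + 1) ≠ M t → ∃ j ∈ J, P j t)
    (hbound : ∀ j ∈ J, f j b ≤ f j a + 1)
    (hone : ∀ j₁ ∈ J, ∀ j₂ ∈ J,
      ¬ (f j₁ a = f j₁ b ∧ Even (f j₁ a)) →
      ¬ (f j₂ a = f j₂ b ∧ Even (f j₂ a)) → j₁ = j₂) :
    ∀ c : ι → ℕ, (∀ k, a ≤ c k ∧ c k ≤ b) →
      ∃ t, a ≤ t ∧ t ≤ b ∧ ∀ k, M (c k) k = M t k := by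
  intro c hc
  refine exists_snapshot_of_change_unique hsingle hab ?_ c hc
  intro s t has hsb hat htb hs ht
  obtain ⟨i, hi, hPi⟩ := hcause s has hsb hs
  obtain ⟨j, hj, hPj⟩ := hcause t hat htb ht
  obtain rfl : i = j := hone i hi j hj
    ((hf i hi).not_eq_and_even_of_odd has hsb.le (inv1 i hi s hPi))
    ((hf j hj).not_eq_and_even_of_odd hat htb.le (inv1 j hj t hPj))
  exact inv2 i hi s t hPi hPj ((hf i hi).eq_of_odd_of_odd (hbound i hi) has hsb.le hat htb.le
    (inv1 i hi s hPi) (inv1 i hi t hPj))
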